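/- For an abelian group G, the space G^# is normal if and only if G is countable. -/

import Mathlib

open scoped Pointwise

/-- The Bohr topology on an abelian group `G`: the initial topology induced by the
family of all group homomorphisms from `G` to the circle group `ℝ/ℤ`. -/
noncomputable def bohrTopology (G : Type*) [AddCommGroup G] : TopologicalSpace G :=
  ⨅ χ : G →+ AddCircle (1 : ℝ), TopologicalSpace.induced χ inferInstance

/-!
The space `G^#` is regular, so it is normal when it is countable, hence Lindelöf.

In a compact group, the regularity of Haar measure provides every open set `U` with a dense
σ-compact subset. If the group embeds in a product, such a subset lies in a set which depends only
on countably many coordinates and is contained in `U`, so `closure U` depends only on countably many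
coordinates. Hence, given uncountably many elements `a i` and `b i` of a group embedded in a product
of compact metrizable groups, an open set containing all `a i + b j` with `i ≠ j` has some
`a i + b i` in its closure.

An uncountable abelian group contains uncountable families `a` and `b` which are so independent that
characters take prescribed values in `{0, t}` on them. All sums `a i + b j` then form a closed
discrete subset of `G^#`, in which the diagonal and its complement cannot be separated.
-/

open Set Topology

universe u

theorem countable_preimage_of_countable_ker {A B : Type*} [AddGroup A] [AddGroup B] {f : A →+ B}
    (hf : (f.ker : Set A).Countable) {s : Set B} (hs : s.Countable) : (f ⁻¹' s).Countable := by
  rw [← biUnion_preimage_singleton]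
  refine hs.biUnion fun b _ ↦ ?_
  obtain hempty | ⟨a₀, ha₀ : f a₀ = b⟩ := (f ⁻¹' {b}).eq_empty_or_nonempty
  · simp [hempty]
  · refine (hf.image (a₀ + ·)).mono fun a ha ↦ ?_
    have ha : f a = b := ha
    exact ⟨-a₀ + a, by simp [AddMonoidHom.mem_ker, ha, ha₀], add_neg_cancel_left a₀ a⟩

theorem countable_ker_nsmul_of_prime {G : Type*} [AddCommGroup G]
    (hprime : ∀ p : ℕ, p.Prime → ((nsmulAddMonoidHom p : G →+ G).ker : Set G).Countable) {n : ℕ}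
    (hn : n ≠ 0) : ((nsmulAddMonoidHom n : G →+ G).ker : Set G).Countable := by
  induction n using induction_on_primes with
  | zero => exact absurd rfl hn
  | one => exact (countable_singleton (0 : G)).mono fun g hg ↦ by simpa using hg
  | prime_mul p m hp ih =>
    refine (countable_preimage_of_countable_ker (hprime p hp)
      (ih (right_ne_zero_of_mul hn))).mono fun g hg ↦ ?_
    simpa [AddMonoidHom.mem_ker, mul_smul, smul_comm p m] using hg

theorem countable_span_of_countable {R M : Type*} [Semiring R] [Countable R] [AddCommMonoid M]
    [Module R M] {s : Set M} (hs : s.Countable) : (Submodule.span R s : Set M).Countable := by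
  have : Countable s := hs
  rw [Finsupp.span_eq_range_linearCombination, LinearMap.coe_range]
  exact countable_range _

theorem exists_uncountable_linearIndepOn {R M : Type*} [Ring R] [Countable R] [AddCommGroup M]
    [Module R M] [Uncountable M]
    (hker : ∀ r : R, r ≠ 0 → ((DistribSMul.toAddMonoidHom M r).ker : Set M).Countable) :
    ∃ s : Set M, Uncountable s ∧ LinearIndepOn R id s := by
  obtain ⟨s, hs, hmax⟩ := exists_maximal_linearIndepOn R (id : M → M)
  refine ⟨s, ⟨fun hcount ↦ not_countable (α := M) ?_⟩, hs⟩
  have : Nontrivial R := Module.nontrivial R M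
  have hspan : (Submodule.span R s : Set M).Countable := countable_span_of_countable hcount
  have hcover : univ ⊆
      ⋃ r : {r : R // r ≠ 0}, DistribSMul.toAddMonoidHom M (r : R) ⁻¹' Submodule.span R s := by
    intro x _
    by_cases hx : x ∈ s
    · exact mem_iUnion.2 ⟨⟨1, one_ne_zero⟩, by simpa using Submodule.subset_span hx⟩
    · obtain ⟨r, hr, hrx⟩ := hmax x hx
      exact mem_iUnion.2 ⟨⟨r, hr⟩, by simpa using hrx⟩
  exact countable_univ_iff.1 <| (countable_iUnion fun r : {r : R // r ≠ 0} ↦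
    countable_preimage_of_countable_ker (hker r r.2) hspan).mono hcover

theorem exists_injective_ratAddCircle_unitAddCircle :
    ∃ f : AddCircle (1 : ℚ) →+ UnitAddCircle, Function.Injective f := by
  have hmem (q : ℚ) : (q : ℝ) ∈ AddSubgroup.zmultiples (1 : ℝ) ↔
      q ∈ AddSubgroup.zmultiples (1 : ℚ) := by
    simp only [AddSubgroup.mem_zmultiples_iff, zsmul_one]
    exact exists_congr fun n ↦ by exact_mod_cast Iff.rfl
  let f : AddCircle (1 : ℚ) →+ UnitAddCircle :=
    QuotientAddGroup.map _ _ (Rat.castHom ℝ).toAddMonoidHom fun q hq ↦ (hmem q).2 hq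
  refine ⟨f, (injective_iff_map_eq_zero f).2 fun x ↦ ?_⟩
  obtain ⟨q, rfl⟩ := QuotientAddGroup.mk_surjective x
  intro hq
  exact (QuotientAddGroup.eq_zero_iff q).2 ((hmem q).1 ((QuotientAddGroup.eq_zero_iff _).1 hq))

theorem exists_character_ne_zero {G : Type*} [AddCommGroup G] {x : G} (hx : x ≠ 0) :
    ∃ χ : G →+ UnitAddCircle, χ x ≠ 0 := by
  obtain ⟨χ, hχ⟩ := CharacterModule.exists_character_apply_ne_zero_of_ne_zero hx
  obtain ⟨f, hf⟩ := exists_injective_ratAddCircle_unitAddCircle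
  exact ⟨f.comp χ, (map_ne_zero_iff f hf).2 hχ⟩

theorem exists_character_eq_zero_on_and_ne_zero {G : Type*} [AddCommGroup G] {H : AddSubgroup G}
    {x : G} (hx : x ∉ H) :
    ∃ χ : G →+ UnitAddCircle, (∀ h ∈ H, χ h = 0) ∧ χ x ≠ 0 := by
  obtain ⟨χ, hχ⟩ := exists_character_ne_zero (mt (QuotientAddGroup.eq_zero_iff x).1 hx)
  refine ⟨χ.comp (QuotientAddGroup.mk' H), fun h hh ↦ ?_, hχ⟩
  rw [AddMonoidHom.comp_apply, QuotientAddGroup.mk'_apply, (QuotientAddGroup.eq_zero_iff h).2 hh,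
    map_zero]

/-- The family `e` is independent in the sense that every `{0, t}`-valued function on its index set,
for a suitable `t ≠ 0`, is the restriction along `e` of a character of `G`. This is the common
consequence of linear independence over `ℤ` and over `ZMod p`. -/
def InterpolatesIndicators {ι G : Type*} [AddCommGroup G] (e : ι → G) : Prop :=
  ∃ t : UnitAddCircle, t ≠ 0 ∧ ∀ T : Set ι, ∃ χ : G →+ UnitAddCircle,
    ∀ i, χ (e i) = T.indicator (fun _ ↦ t) i

theorem interpolatesIndicators_of_linearIndependent {R M G ι : Type*} [Ring R] [Nontrivial R]
    [AddCommGroup M] [Module R M] [AddCommGroup G] {e : ι → M} (he : LinearIndependent R e)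
    {f : M →+ G} (hf : Function.Injective f) : InterpolatesIndicators (f ∘ e) := by
  classical
  obtain ⟨θ, hθ⟩ := exists_character_ne_zero (one_ne_zero (α := R))
  refine ⟨θ 1, hθ, fun T ↦ ?_⟩
  obtain ⟨χ, hχ⟩ := (Module.Baer.of_divisible UnitAddCircle).extension_property_addMonoidHom
    (f.comp (Finsupp.linearCombination R e).toAddMonoidHom) (hf.comp he)
    (Finsupp.liftAddHom (T.indicator fun _ ↦ θ))
  refine ⟨χ, fun i ↦ ?_⟩
  have hi := DFunLike.congr_fun hχ (Finsupp.single i 1)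
  by_cases hiT : i ∈ T <;> simpa [hiT] using hi

theorem InterpolatesIndicators.comp_injective {ι κ G : Type*} [AddCommGroup G] {e : ι → G}
    (he : InterpolatesIndicators e) {σ : κ → ι} (hσ : σ.Injective) :
    InterpolatesIndicators (e ∘ σ) := by
  obtain ⟨t, ht, hchar⟩ := he
  refine ⟨t, ht, fun T ↦ ?_⟩
  obtain ⟨χ, hχ⟩ := hchar (σ '' T)
  refine ⟨χ, fun k ↦ ?_⟩
  rw [Function.comp_apply, hχ, indicator_image hσ]
  rfl

theorem InterpolatesIndicators.injective_add {ι κ G : Type*} [AddCommGroup G] {e : ι ⊕ κ → G}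
    (he : InterpolatesIndicators e) :
    Function.Injective fun p : ι × κ ↦ e (.inl p.1) + e (.inr p.2) := by
  obtain ⟨t, ht, hchar⟩ := he
  rintro ⟨i, j⟩ ⟨k, l⟩ (h : e (.inl i) + e (.inr j) = e (.inl k) + e (.inr l))
  obtain ⟨χ, hχ⟩ := hchar {.inl i}
  obtain ⟨ψ, hψ⟩ := hchar {.inr j}
  have hik : k = i := by
    by_contra hne
    simpa [hχ, hne, ht] using congrArg χ h
  have hjl : l = j := by
    by_contra hne
    simpa [hψ, hne, ht] using congrArg ψ h
  rw [hik, hjl]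

theorem exists_uncountable_interpolatesIndicators (G : Type u) [AddCommGroup G] [Uncountable G] :
    ∃ (ι : Type u) (e : ι → G), Uncountable ι ∧ InterpolatesIndicators e := by
  by_cases hprime : ∀ p : ℕ, p.Prime → ((nsmulAddMonoidHom p : G →+ G).ker : Set G).Countable
  · have hker (n : ℤ) (hn : n ≠ 0) : ((DistribSMul.toAddMonoidHom G n).ker : Set G).Countable := by
      convert countable_ker_nsmul_of_prime hprime (Int.natAbs_ne_zero.2 hn) using 1
      ext g
      simp [AddMonoidHom.mem_ker]
    obtain ⟨s, hs, hind⟩ := exists_uncountable_linearIndepOn hker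
    exact ⟨s, _, hs, interpolatesIndicators_of_linearIndependent (f := AddMonoidHom.id G) hind
      Function.injective_id⟩
  · push Not at hprime
    obtain ⟨p, hp, huncount⟩ := hprime
    have : Fact p.Prime := ⟨hp⟩
    let N := (nsmulAddMonoidHom p : G →+ G).ker
    have : Uncountable N := not_countable_iff.1 huncount
    let _ : Module (ZMod p) N := AddCommGroup.zmodModule fun x ↦ Subtype.ext x.2
    have hker (r : ZMod p) (hr : r ≠ 0) :
        ((DistribSMul.toAddMonoidHom N r).ker : Set N).Countable :=
      (countable_singleton 0).mono fun x (hx : r • x = 0) ↦ hr.isUnit.smul_eq_zero.1 hx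
    obtain ⟨s, hs, hind⟩ := exists_uncountable_linearIndepOn hker
    exact ⟨s, _, hs, interpolatesIndicators_of_linearIndependent (f := N.subtype) hind
      N.subtype_injective⟩

theorem exists_isSigmaCompact_subset_closure {X : Type*} [TopologicalSpace X] [T2Space X]
    [MeasurableSpace X] [OpensMeasurableSpace X] (μ : MeasureTheory.Measure X)
    [μ.InnerRegularCompactLTTop] [μ.IsOpenPosMeasure] {U : Set X} (hU : IsOpen U)
    (hμ : μ U ≠ ⊤) : ∃ S ⊆ U, IsSigmaCompact S ∧ U ⊆ closure S := by
  have happrox (n : ℕ) : ∃ K ⊆ U, IsCompact K ∧ μ (U \ K) < (n : ENNReal)⁻¹ :=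
    hU.measurableSet.exists_isCompact_sdiff_lt hμ (by simp)
  choose K hKU hK hμK using happrox
  refine ⟨⋃ n, K n, iUnion_subset hKU, isSigmaCompact_iUnion_of_isCompact K hK, ?_⟩
  have hnull : μ (U \ closure (⋃ n, K n)) = 0 := by
    by_contra hpos
    obtain ⟨n, hn⟩ := ENNReal.exists_inv_nat_lt hpos
    refine (hn.trans_le (MeasureTheory.measure_mono ?_)).not_gt (hμK n)
    exact sdiff_subset_sdiff_right ((subset_iUnion K n).trans subset_closure)
  exact sdiff_eq_empty.1 ((hU.sdiff isClosed_closure).eq_empty_of_measure_zero hnull)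

theorem exists_isSigmaCompact_subset_closure_of_compact_group {K : Type*} [AddGroup K]
    [TopologicalSpace K] [IsTopologicalAddGroup K] [CompactSpace K] [T2Space K] {U : Set K}
    (hU : IsOpen U) : ∃ S ⊆ U, IsSigmaCompact S ∧ U ⊆ closure S := by
  borelize K
  exact exists_isSigmaCompact_subset_closure MeasureTheory.Measure.addHaar hU
    (MeasureTheory.measure_ne_top _ U)

theorem exists_countable_isOpen_preimage_domRestrict {ι : Type*} {X : ι → Type*}
    [∀ i, TopologicalSpace (X i)] {S U : Set (∀ i, X i)} (hS : IsLindelof S) (hU : IsOpen U)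
    (hSU : S ⊆ U) :
    ∃ (C : Set ι) (W : Set (∀ i : C, X i)), C.Countable ∧ IsOpen W ∧
      S ⊆ C.domRestrict ⁻¹' W ∧ C.domRestrict ⁻¹' W ⊆ U := by
  choose! I u hu hIU using isOpen_pi_iff.1 hU
  have hbox (x) (hx : x ∈ S) : (I x : Set ι).pi (u x) ∈ 𝓝 x :=
    set_pi_mem_nhds (I x).finite_toSet fun i hi ↦
      (hu x (hSU hx) i hi).1.mem_nhds (hu x (hSU hx) i hi).2
  obtain ⟨t, ht, htS, hcover⟩ := hS.elim_nhds_subcover _ hbox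
  let C : Set ι := ⋃ x ∈ t, I x
  let W (x : ∀ i, X i) : Set (∀ i : C, X i) := ((↑) ⁻¹' (I x : Set ι)).pi fun i ↦ u x i
  have hW {x} (hx : x ∈ t) : C.domRestrict ⁻¹' W x = (I x : Set ι).pi (u x) := by
    ext y
    exact ⟨fun hy i hi ↦ hy ⟨i, mem_biUnion hx hi⟩ hi, fun hy i hi ↦ hy i hi⟩
  refine ⟨C, ⋃ x ∈ t, W x, ht.biUnion fun x _ ↦ (I x).countable_toSet,
    isOpen_biUnion fun x hx ↦ isOpen_set_pi ((I x).finite_toSet.preimage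
      Subtype.val_injective.injOn) fun i hi ↦ (hu x (hSU (htS x hx)) i hi).1, ?_⟩
  have hpreimage : C.domRestrict ⁻¹' (⋃ x ∈ t, W x) = ⋃ x ∈ t, (I x : Set ι).pi (u x) := by
    rw [preimage_iUnion₂]
    exact iUnion₂_congr fun x hx ↦ hW hx
  rw [hpreimage]
  exact ⟨hcover, iUnion₂_subset fun x hx ↦ hIU x (hSU (htS x hx))⟩

theorem closure_preimage_eq_of_compact_group {K H : Type*} [AddGroup K] [TopologicalSpace K]
    [ContinuousAdd K] [CompactSpace K] [AddGroup H] [TopologicalSpace H] [T2Space H]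
    {f : K →+ H} (hf : Continuous f) (W : Set H) :
    closure (f ⁻¹' W) = f ⁻¹' closure (f '' (f ⁻¹' W)) := by
  refine Subset.antisymm (fun x hx ↦ map_mem_closure hf hx (mapsTo_image _ _)) fun x hx ↦ ?_
  rw [mem_preimage, ← image_closure_of_isCompact isClosed_closure.isCompact hf.continuousOn] at hx
  obtain ⟨y, hy, hyx⟩ := hx
  have htranslate : MapsTo (· + (-y + x)) (f ⁻¹' W) (f ⁻¹' W) := fun z hz ↦ by
    simpa [hyx] using hz
  simpa using map_mem_closure (continuous_add_const (-y + x)) hy htranslate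

theorem exists_mem_closure_image_compl_singleton {ι X : Type*} [Uncountable ι] [TopologicalSpace X]
    [SecondCountableTopology X] (h : ι → X) : ∃ i, h i ∈ closure (h '' {i}ᶜ) := by
  by_contra! hisolated
  let _ : TopologicalSpace ι := .induced h inferInstance
  have : SecondCountableTopology ι := TopologicalSpace.secondCountableTopology_induced _ _ h
  have : DiscreteTopology ι := by
    refine discreteTopology_iff_isOpen_singleton.2 fun i ↦ ?_
    rw [← isClosed_compl_iff, ← closure_subset_iff_isClosed, subset_compl_singleton_iff,
      closure_induced]
    exact hisolated i
  exact not_countable (TopologicalSpace.separableSpace_iff_countable.1 inferInstance : Countable ι)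

section CompactGroup

variable {K ι : Type*} [AddGroup K] [TopologicalSpace K] [IsTopologicalAddGroup K]
  [CompactSpace K] [T2Space K] {M : ι → Type*} [∀ i, AddGroup (M i)]
  [∀ i, TopologicalSpace (M i)] [∀ i, T2Space (M i)] {f : ∀ i, K →+ M i}

theorem exists_countable_preimage_closure_image_subset (hf : IsInducing (AddMonoidHom.pi f))
    {U : Set K} (hU : IsOpen U) :
    ∃ C : Set ι, C.Countable ∧
      AddMonoidHom.pi (fun i : C ↦ f i) ⁻¹' closure (AddMonoidHom.pi (fun i : C ↦ f i) '' U) ⊆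
        closure U := by
  obtain ⟨S, hSU, hS, hUS⟩ := exists_isSigmaCompact_subset_closure_of_compact_group hU
  obtain ⟨V, hV, rfl⟩ := hf.isOpen_iff.1 hU
  obtain ⟨C, W, hC, -, hSW, hWV⟩ := exists_countable_isOpen_preimage_domRestrict
    (hS.isLindelof.image hf.continuous) hV (image_subset_iff.2 hSU)
  refine ⟨C, hC, ?_⟩
  set g := AddMonoidHom.pi fun i : C ↦ f i
  have hg : Continuous g := continuous_pi fun i ↦ (continuous_apply i.1).comp hf.continuous
  have hSg : S ⊆ g ⁻¹' W := fun x hx ↦ hSW (mem_image_of_mem _ hx)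
  have hgU : g ⁻¹' W ⊆ AddMonoidHom.pi f ⁻¹' V := preimage_mono (f := AddMonoidHom.pi f) hWV
  calc g ⁻¹' closure (g '' (AddMonoidHom.pi f ⁻¹' V))
    _ ⊆ g ⁻¹' closure (g '' closure (g ⁻¹' W)) := by gcongr; exact hUS.trans (closure_mono hSg)
    _ = g ⁻¹' closure (g '' (g ⁻¹' W)) := by rw [closure_image_closure hg]
    _ = closure (g ⁻¹' W) := (closure_preimage_eq_of_compact_group hg W).symm
    _ ⊆ closure (AddMonoidHom.pi f ⁻¹' V) := closure_mono hgU

theorem exists_diagonal_mem_closure_of_compact_group [∀ i, ContinuousAdd (M i)]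
    [∀ i, SecondCountableTopology (M i)] (hf : IsInducing (AddMonoidHom.pi f)) {κ : Type*}
    [Uncountable κ] {a b : κ → K} {U : Set K} (hU : IsOpen U)
    (hoff : ∀ i j, i ≠ j → a i + b j ∈ U) : ∃ i, a i + b i ∈ closure U := by
  obtain ⟨C, hC, hclosure⟩ := exists_countable_preimage_closure_image_subset hf hU
  have : Countable C := hC
  set g := AddMonoidHom.pi fun i : C ↦ f i
  obtain ⟨i, hi⟩ := exists_mem_closure_image_compl_singleton fun j ↦ g (b j)
  refine ⟨i, hclosure ?_⟩
  have hmaps : MapsTo (g (a i) + ·) ((fun j ↦ g (b j)) '' {i}ᶜ) (g '' U) := by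
    rintro _ ⟨j, hj, rfl⟩
    exact ⟨a i + b j, hoff i j (Ne.symm hj), map_add g _ _⟩
  rw [mem_preimage, map_add]
  exact map_mem_closure (continuous_const_add _) hi hmaps

end CompactGroup

theorem exists_diagonal_mem_closure {G ι κ : Type*} [AddGroup G] [TopologicalSpace G]
    {M : ι → Type*} [∀ i, AddGroup (M i)] [∀ i, TopologicalSpace (M i)]
    [∀ i, IsTopologicalAddGroup (M i)] [∀ i, CompactSpace (M i)] [∀ i, T2Space (M i)]
    [∀ i, SecondCountableTopology (M i)] {f : ∀ i, G →+ M i} (hf : IsInducing (AddMonoidHom.pi f))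
    [Uncountable κ] {a b : κ → G} {U : Set G} (hU : IsOpen U)
    (hoff : ∀ i j, i ≠ j → a i + b j ∈ U) : ∃ i, a i + b i ∈ closure U := by
  obtain ⟨V, hV, rfl⟩ := hf.isOpen_iff.1 hU
  set φ := AddMonoidHom.pi f
  let K := φ.range.topologicalClosure
  have : CompactSpace K :=
    isCompact_iff_compactSpace.1 φ.range.isClosed_topologicalClosure.isCompact
  let ψ (g : G) : K := ⟨φ g, subset_closure ⟨g, rfl⟩⟩
  obtain ⟨i, hi⟩ := exists_diagonal_mem_closure_of_compact_group
    (f := fun i ↦ (Pi.evalAddMonoidHom M i).comp K.subtype) IsInducing.subtypeVal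
    (a := ψ ∘ a) (b := ψ ∘ b) (hV.preimage continuous_subtype_val) fun i j hij ↦ by
      simpa [ψ] using hoff i j hij
  refine ⟨i, ?_⟩
  have hK : V ∩ K ⊆ closure (V ∩ range φ) := hV.inter_closure
  have hclosure : φ (a i + b i) ∈ closure (V ∩ K) := by
    have hmaps : MapsTo ((↑) : K → ∀ i, M i) ((↑) ⁻¹' V) (V ∩ K) := fun k hk ↦ ⟨hk, k.2⟩
    simpa [ψ] using map_mem_closure continuous_subtype_val hi hmaps
  rw [hf.closure_eq_preimage_closure_image, image_preimage_eq_inter_range]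
  exact closure_minimal hK isClosed_closure hclosure

theorem exists_finset_mem_span_image {R M ι : Type*} [Semiring R] [AddCommMonoid M] [Module R M]
    {e : ι → M} {x : M} (hx : x ∈ Submodule.span R (range e)) :
    ∃ F : Finset ι, x ∈ Submodule.span R (e '' F) := by
  classical
  obtain ⟨T, hT, hxT⟩ := Submodule.mem_span_finite_of_mem_span hx
  rw [← image_univ, Finset.subset_set_image_iff] at hT
  obtain ⟨F, -, rfl⟩ := hT
  exact ⟨F, by rwa [← Finset.coe_image]⟩

section ContinuousCharacters

variable {G : Type*} [AddCommGroup G] [TopologicalSpace G]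

theorem t2Space_of_continuous_characters (hcont : ∀ χ : G →+ UnitAddCircle, Continuous χ) :
    T2Space G := by
  refine .of_injective_continuous (f := fun x (χ : G →+ UnitAddCircle) ↦ χ x) (fun x y hxy ↦ ?_)
    (continuous_pi hcont)
  by_contra hne
  obtain ⟨χ, hχ⟩ := exists_character_ne_zero (sub_ne_zero.2 hne)
  exact hχ (by rw [map_sub, sub_eq_zero]; exact congrFun hxy χ)

theorem isClosed_addSubgroup_of_continuous_characters
    (hcont : ∀ χ : G →+ UnitAddCircle, Continuous χ) (H : AddSubgroup G) :
    IsClosed (H : Set G) := by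
  have hinter : (H : Set G) =
      ⋂ (χ : G →+ UnitAddCircle) (_ : ∀ h ∈ H, χ h = 0), χ ⁻¹' {0} := by
    refine Subset.antisymm (fun x hx ↦ mem_iInter₂.2 fun χ hχ ↦ hχ x hx) fun x hx ↦ ?_
    by_contra hxH
    obtain ⟨χ, hχ, hχx⟩ := exists_character_eq_zero_on_and_ne_zero hxH
    exact hχx (mem_iInter₂.1 hx χ hχ)
  rw [hinter]
  exact isClosed_biInter fun χ _ ↦ isClosed_singleton.preimage (hcont χ)

namespace InterpolatesIndicators

variable {ι κ : Type*} {e : ι ⊕ κ → G}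

theorem exists_nhds_finite_add_mem (he : InterpolatesIndicators e)
    (hcont : ∀ χ : G →+ UnitAddCircle, Continuous χ) {x : G}
    (hx : x ∈ Submodule.span ℤ (range e)) :
    ∃ V ∈ 𝓝 x, {p : ι × κ | e (.inl p.1) + e (.inr p.2) ∈ V}.Finite := by
  obtain ⟨F, hxF⟩ := exists_finset_mem_span_image hx
  obtain ⟨t, ht, hchar⟩ := he
  obtain ⟨χ, hχ⟩ := hchar (range .inl \ F)
  obtain ⟨ψ, hψ⟩ := hchar (range .inr \ F)
  have hvanish (θ : G →+ UnitAddCircle) (hθ : ∀ i ∈ F, θ (e i) = 0) : θ x = 0 :=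
    (Submodule.span_le (p := θ.toIntLinearMap.ker)).2 (forall_mem_image.2 hθ) hxF
  have hχx : χ x = 0 := hvanish χ fun i hi ↦ by simp [hχ, hi]
  have hψx : ψ x = 0 := hvanish ψ fun i hi ↦ by simp [hψ, hi]
  have hopen : IsOpen {y | χ y ≠ t ∧ ψ y ≠ t} :=
    (isOpen_compl_singleton.preimage (hcont χ)).inter (isOpen_compl_singleton.preimage (hcont ψ))
  refine ⟨_, hopen.mem_nhds ⟨by rw [hχx]; exact ht.symm, by rw [hψx]; exact ht.symm⟩, ?_⟩
  refine ((F.finite_toSet.preimage Sum.inl_injective.injOn).prod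
    (F.finite_toSet.preimage Sum.inr_injective.injOn)).subset fun p hp ↦ ⟨?_, ?_⟩
  · by_contra hpF
    exact hp.1 (by simp_all)
  · by_contra hpF
    exact hp.2 (by simp_all)

theorem locallyFinite_add (he : InterpolatesIndicators e)
    (hcont : ∀ χ : G →+ UnitAddCircle, Continuous χ) :
    LocallyFinite fun p : ι × κ ↦ ({e (.inl p.1) + e (.inr p.2)} : Set G) := by
  intro x
  simp only [singleton_inter_nonempty]
  let H := Submodule.span ℤ (range e)
  by_cases hx : x ∈ H
  · exact he.exists_nhds_finite_add_mem hcont hx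
  · have hclosed := isClosed_addSubgroup_of_continuous_characters hcont H.toAddSubgroup
    refine ⟨_, hclosed.isOpen_compl.mem_nhds hx, finite_empty.subset fun p hp ↦ hp ?_⟩
    exact H.add_mem (Submodule.subset_span ⟨_, rfl⟩) (Submodule.subset_span ⟨_, rfl⟩)

theorem isClosed_image_add (he : InterpolatesIndicators e)
    (hcont : ∀ χ : G →+ UnitAddCircle, Continuous χ) (R : Set (ι × κ)) :
    IsClosed ((fun p : ι × κ ↦ e (.inl p.1) + e (.inr p.2)) '' R) := by
  have : T2Space G := t2Space_of_continuous_characters hcont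
  rw [← biUnion_of_singleton (_ '' R), biUnion_image, biUnion_eq_iUnion]
  exact ((he.locallyFinite_add hcont).comp_injective Subtype.val_injective).isClosed_iUnion
    fun _ ↦ isClosed_singleton

end InterpolatesIndicators

end ContinuousCharacters

section BohrTopology

variable (G : Type*) [AddCommGroup G]

theorem isInducing_pi_characters_bohrTopology :
    letI := bohrTopology G
    IsInducing (AddMonoidHom.pi fun χ : G →+ UnitAddCircle ↦ χ) :=
  letI := bohrTopology G
  inducing_iInf_to_pi _

theorem continuous_character_bohrTopology (χ : G →+ UnitAddCircle) :
    Continuous[bohrTopology G, _] χ :=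
  continuous_iInf_dom continuous_induced_dom

theorem regularSpace_bohrTopology : @RegularSpace G (bohrTopology G) :=
  regularSpace_iInf fun χ ↦ regularSpace_induced χ

theorem not_normalSpace_bohrTopology_of_uncountable [Uncountable G] :
    ¬ @NormalSpace G (bohrTopology G) := by
  let _ := bohrTopology G
  intro hnormal
  obtain ⟨ι, e₀, hι, he₀⟩ := exists_uncountable_interpolatesIndicators G
  obtain ⟨σ⟩ : Nonempty (ι ⊕ ι ≃ ι) := by
    rw [← Cardinal.eq, Cardinal.mk_sum, Cardinal.lift_id,
      Cardinal.add_eq_self (Cardinal.aleph0_le_mk ι)]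
  let e := e₀ ∘ σ
  have he : InterpolatesIndicators e := he₀.comp_injective σ.injective
  have hcont := continuous_character_bohrTopology G
  obtain ⟨U, V, hU, hV, hoff, hdiag, hUV⟩ := normal_separation
    (he.isClosed_image_add hcont (diagonal ι)ᶜ) (he.isClosed_image_add hcont (diagonal ι))
    ((disjoint_image_iff he.injective_add).2 disjoint_compl_left)
  obtain ⟨i, hi⟩ := exists_diagonal_mem_closure (isInducing_pi_characters_bohrTopology G)
    (a := e ∘ Sum.inl) (b := e ∘ Sum.inr) hU fun i j hij ↦ hoff ⟨(i, j), hij, rfl⟩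
  exact (hUV.closure_left hV).notMem_of_mem_left hi (hdiag ⟨(i, i), rfl, rfl⟩)

end BohrTopology

/-- For an abelian group `G`, the space `G^#` is normal iff `G` is countable. -/
theorem bohr_normal_iff_countable (G : Type*) [AddCommGroup G] :
    letI := bohrTopology G
    NormalSpace G ↔ Countable G := by
  let _ := bohrTopology G
  constructor
  · intro hnormal
    by_contra hG
    have : Uncountable G := not_countable_iff.1 hG
    exact not_normalSpace_bohrTopology_of_uncountable G hnormal
  · intro hG
    have : RegularSpace G := regularSpace_bohrTopology G
    exact NormalSpace.of_regularSpace_lindelofSpace
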